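/- Let R be a Noetherian ring, I an ideal, M a finitely generated R-module, f ∈ R with multiplication by f injective on M/Γ_I(M). Then Ann_M(f) ⊆ Γ_I(M), and consequently for all sufficiently large n, f is a nonzerodivisor on I^n M. -/

import Mathlib

/-- The `I`-torsion submodule `Γ_I(M) = ⋃ n, (0 :_M I^n)`. -/
noncomputable def torsionGamma {R : Type*} [CommRing R] (I : Ideal R) (M : Type*)
    [AddCommGroup M] [Module R M] : Submodule R M :=
  ⨆ n : ℕ, Submodule.torsionBySet R M ((I ^ n : Ideal R) : Set R)

/-- If multiplication by `f` is injective on `M/Γ_I(M)` then `Ann_M(f) ⊆ Γ_I(M)`,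
and `f` is a nonzerodivisor on `I^n M` for all large `n`. -/
theorem stmt_17 {R M : Type*} [CommRing R] [IsNoetherianRing R] [AddCommGroup M] [Module R M]
    [Module.Finite R M] (I : Ideal R) (f : R)
    (hf : Function.Injective (fun x : M ⧸ torsionGamma I M => f • x)) :
    LinearMap.ker (LinearMap.lsmul R M f) ≤ torsionGamma I M ∧
      ∃ n₀ : ℕ, ∀ n ≥ n₀, ∀ x ∈ (I ^ n • (⊤ : Submodule R M)), f • x = 0 → x = 0 := by
  have h1 : LinearMap.ker (LinearMap.lsmul R M f) ≤ torsionGamma I M := by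
    intro x hx
    have hx' : f • x = 0 := by simpa using hx
    rw [← Submodule.Quotient.mk_eq_zero]
    apply hf
    simp only [smul_zero]
    rw [← Submodule.Quotient.mk_smul, hx', Submodule.Quotient.mk_zero]
  refine ⟨h1, ?_⟩
  let T : ℕ →o Submodule R M :=
    ⟨fun n => Submodule.torsionBySet R M ((I ^ n : Ideal R) : Set R), fun a b hab =>
      Submodule.torsionBySet_le_torsionBySet_of_subset (Ideal.pow_le_pow_right hab)⟩
  have hN : IsNoetherian R M := inferInstance
  obtain ⟨m, hm⟩ := monotone_stabilizes_iff_noetherian.mpr hN T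
  have hG : torsionGamma I M ≤ T m := by
    refine iSup_le fun n => ?_
    change T n ≤ T m
    rcases le_total n m with h | h
    · exact T.monotone h
    · exact (hm n h).ge
  obtain ⟨k, hk⟩ := Ideal.exists_pow_inf_eq_pow_smul I (torsionGamma I M)
  refine ⟨k + m, fun n hn x hx hfx => ?_⟩
  have hxG : x ∈ torsionGamma I M := h1 (by simpa using hfx)
  have hx2 : x ∈ I ^ n • (⊤ : Submodule R M) ⊓ torsionGamma I M := ⟨hx, hxG⟩
  rw [hk n (by omega)] at hx2
  have hle : I ^ (n - k) • (I ^ k • (⊤ : Submodule R M) ⊓ torsionGamma I M) ≤ ⊥ := by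
    rw [Submodule.smul_le]
    intro r hr y hy
    have hy' := hG hy.2
    have hr' : r ∈ I ^ m := Ideal.pow_le_pow_right (by omega) hr
    exact (Submodule.mem_torsionBySet_iff _ _).mp hy' ⟨r, hr'⟩
  exact (Submodule.mem_bot R).mp (hle hx2)
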